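/- Let n ≥ m ≥ 1, u, v ∈ A+ and Z ∈ {X,Y}. If u and v agree on condensed rankers from uR^Z_{m,n} and if r ∈ uR^Z_{m,n} is defined on both u and v, then there exists a ranker r' ∈ uR^Z_{m,n} which is condensed on both u and v and which coincides with r on both words, i.e. r'(u) = r(u) and r'(v) = r(v). -/

import Mathlib

namespace RankerPaper

variable {A : Type*} [DecidableEq A]

/-- Letters of rankers: `X a` ("next `a` to the right") and `Y a` ("next `a` to the left"). -/
inductive RLetter (A : Type*) where
  | X : A → RLetter A
  | Y : A → RLetter A
  deriving DecidableEq

/-- Least `a`-position of `u` strictly greater than `q` (positions are 1-indexed). -/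
def nextOcc (u : List A) (a : A) (q : ℕ) : Option ℕ :=
  ((List.range (u.length + 2)).filter (fun i => decide (q < i ∧ u[i-1]? = some a))).head?

/-- Greatest `a`-position of `u` strictly less than `q` (positions are 1-indexed). -/
def prevOcc (u : List A) (a : A) (q : ℕ) : Option ℕ :=
  ((List.range (u.length + 2)).filter
    (fun i => decide (1 ≤ i ∧ i < q ∧ u[i-1]? = some a))).getLast?

/-- One evaluation step of a ranker letter from position `q`. -/
def stepR (u : List A) : RLetter A → ℕ → Option ℕ
  | .X a, q => nextOcc u a q
  | .Y a, q => prevOcc u a q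

/-- Evaluation of a ranker from position `q`, processing letters left to right. -/
def evalFrom (u : List A) : List (RLetter A) → ℕ → Option ℕ
  | [], q => some q
  | z :: r, q => (stepR u z q).bind (evalFrom u r)

/-- Starting position: `0` for an `X`-letter, `|u|+1` for a `Y`-letter. -/
def startPos (u : List A) : RLetter A → ℕ
  | .X _ => 0
  | .Y _ => u.length + 1

/-- The position `r(u)` defined by the ranker `r` on `u` (`none` if undefined;
empty rankers are considered undefined, rankers being nonempty words). -/
def evalR (u : List A) (r : List (RLetter A)) : Option ℕ :=
  match r with
  | [] => none
  | z :: t => evalFrom u (z :: t) (startPos u z)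

/-- `r` is defined on `u`. -/
def Defined (u : List A) (r : List (RLetter A)) : Prop := (evalR u r).isSome

/-- The position `r(u)` (defaulting to `0` when undefined). -/
def pos (u : List A) (r : List (RLetter A)) : ℕ := (evalR u r).getD 0

/-- Do two ranker letters have the same direction? -/
def sameDir : RLetter A → RLetter A → Bool
  | .X _, .X _ => true
  | .Y _, .Y _ => true
  | _, _ => false

/-- Number of (alternating) blocks of a ranker. -/
def numBlocks : List (RLetter A) → ℕ
  | [] => 0
  | [_] => 1
  | z :: w :: t => (if sameDir z w then 0 else 1) + numBlocks (w :: t)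

def startsX (r : List (RLetter A)) : Prop := ∃ a t, r = RLetter.X a :: t
def startsY (r : List (RLetter A)) : Prop := ∃ a t, r = RLetter.Y a :: t
def endsX (r : List (RLetter A)) : Prop := ∃ a, r.getLast? = some (RLetter.X a)
def endsY (r : List (RLetter A)) : Prop := ∃ a, r.getLast? = some (RLetter.Y a)

/-- `R^X_{m,n}`: rankers with exactly `m` blocks, depth `n`, starting with an `X`-block. -/
def RX (m n : ℕ) (r : List (RLetter A)) : Prop :=
  numBlocks r = m ∧ r.length = n ∧ startsX r

/-- `R^Y_{m,n}`: rankers with exactly `m` blocks, depth `n`, starting with a `Y`-block. -/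
def RY (m n : ℕ) (r : List (RLetter A)) : Prop :=
  numBlocks r = m ∧ r.length = n ∧ startsY r

/-- `uR^X_{m,n}`. -/
def uRX (m n : ℕ) (r : List (RLetter A)) : Prop :=
  (∃ m' n', m' ≤ m ∧ n' ≤ n ∧ RX m' n' r) ∨ (∃ m' n', m' < m ∧ n' < n ∧ RY m' n' r)

/-- `uR^Y_{m,n}`. -/
def uRY (m n : ℕ) (r : List (RLetter A)) : Prop :=
  (∃ m' n', m' ≤ m ∧ n' ≤ n ∧ RY m' n' r) ∨ (∃ m' n', m' < m ∧ n' < n ∧ RX m' n' r)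

/-- `uR_{m,n} = uR^X_{m,n} ∪ uR^Y_{m,n}`. -/
def uR (m n : ℕ) (r : List (RLetter A)) : Prop := uRX m n r ∨ uRY m n r

/-- `uR^X_m = ∪_{n ≥ m} uR^X_{m,n}`. -/
def uRXm (m : ℕ) (r : List (RLetter A)) : Prop := ∃ n, m ≤ n ∧ uRX m n r

/-- `uR^Y_m = ∪_{n ≥ m} uR^Y_{m,n}`. -/
def uRYm (m : ℕ) (r : List (RLetter A)) : Prop := ∃ n, m ≤ n ∧ uRY m n r

/-- `r = Z₁ ⋯ Z_n` is condensed on `u`: it is defined on `u` and there is a chain of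
open intervals `(0;|u|+1) = (i₀;j₀) ⊃ (i₁;j₁) ⊃ ⋯ ⊃ (i_{n-1};j_{n-1}) ∋ r(u)`
updated according to the pairs `Z_ℓ Z_{ℓ+1}`. -/
def Condensed (u : List A) (r : List (RLetter A)) : Prop :=
  ∃ (p : ℕ) (i j : ℕ → ℕ),
    evalR u r = some p ∧
    i 0 = 0 ∧ j 0 = u.length + 1 ∧
    (∀ ℓ a b, 1 ≤ ℓ → r[ℓ-1]? = some (RLetter.X a) → r[ℓ]? = some (RLetter.X b) →
        nextOcc u a (i (ℓ-1)) = some (i ℓ) ∧ j ℓ = j (ℓ-1)) ∧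
    (∀ ℓ a b, 1 ≤ ℓ → r[ℓ-1]? = some (RLetter.Y a) → r[ℓ]? = some (RLetter.Y b) →
        i ℓ = i (ℓ-1) ∧ prevOcc u a (j (ℓ-1)) = some (j ℓ)) ∧
    (∀ ℓ a b, 1 ≤ ℓ → r[ℓ-1]? = some (RLetter.X a) → r[ℓ]? = some (RLetter.Y b) →
        i ℓ = i (ℓ-1) ∧ nextOcc u a (i (ℓ-1)) = some (j ℓ)) ∧
    (∀ ℓ a b, 1 ≤ ℓ → r[ℓ-1]? = some (RLetter.Y a) → r[ℓ]? = some (RLetter.X b) →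
        prevOcc u a (j (ℓ-1)) = some (i ℓ) ∧ j ℓ = j (ℓ-1)) ∧
    (∀ ℓ, 1 ≤ ℓ → ℓ < r.length →
        i (ℓ-1) ≤ i ℓ ∧ j ℓ ≤ j (ℓ-1) ∧ (i (ℓ-1) < i ℓ ∨ j ℓ < j (ℓ-1))) ∧
    i (r.length - 1) < p ∧ p < j (r.length - 1)

/-- `u` and `v` agree on rankers from the set `R`. -/
def AgreeDef (R : List (RLetter A) → Prop) (u v : List A) : Prop :=
  ∀ r, R r → (Defined u r ↔ Defined v r)

/-- `u` and `v` agree on condensed rankers from the set `R`. -/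
def AgreeCond (R : List (RLetter A) → Prop) (u v : List A) : Prop :=
  ∀ r, R r → (Condensed u r ↔ Condensed v r)

/-- `u ⊳_{m,n} v`. -/
def trir (m n : ℕ) (u v : List A) : Prop := AgreeCond (uRX m n) u v

/-- `u ⊲_{m,n} v`. -/
def tril (m n : ℕ) (u v : List A) : Prop := AgreeCond (uRY m n) u v

/-- The alphabet (set of letters) of a word. -/
def alph (u : List A) : Finset A := u.toFinset

/-- Condition (WI 1). -/
def WI1 (m n : ℕ) (u v : List A) : Prop := AgreeDef (uR m n) u v

/-- Condition (WI 2). -/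
def WI2 (m n : ℕ) (u v : List A) : Prop :=
  ∀ r r', uR m n r → uR (m-1) (n-1) r' →
    Defined u r → Defined v r → Defined u r' → Defined v r' →
    compare (pos u r) (pos u r') = compare (pos v r) (pos v r')

/-- Condition (WI 3). -/
def WI3 (m n : ℕ) (u v : List A) : Prop :=
  ∀ r r', uR m n r → uR m (n-1) r' →
    ((endsX r ∧ endsY r') ∨ (endsY r ∧ endsX r')) →
    Defined u r → Defined v r → Defined u r' → Defined v r' →
    compare (pos u r) (pos u r') = compare (pos v r) (pos v r')

/-- Condition (WI 1c). -/
def WI1c (m n : ℕ) (u v : List A) : Prop := AgreeCond (uR m n) u v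

/-- Condition (WI 2c). -/
def WI2c (m n : ℕ) (u v : List A) : Prop :=
  ∀ r r', uR m n r → uR (m-1) (n-1) r' →
    Condensed u r → Condensed v r → Condensed u r' → Condensed v r' →
    compare (pos u r) (pos u r') = compare (pos v r) (pos v r')

/-- Condition (WI 3c). -/
def WI3c (m n : ℕ) (u v : List A) : Prop :=
  ∀ r r', uR m n r → uR m (n-1) r' →
    ((endsX r ∧ endsY r') ∨ (endsY r ∧ endsX r')) →
    Condensed u r → Condensed v r → Condensed u r' → Condensed v r' →
    compare (pos u r) (pos u r') = compare (pos v r) (pos v r')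


theorem nextOcc_iff (u : List A) (a : A) (q p : ℕ) :
    nextOcc u a q = some p ↔
      q < p ∧ u[p-1]? = some a ∧ ∀ k, q < k → k < p → u[k-1]? ≠ some a := by
  unfold nextOcc
  rw [List.head?_filter, List.find?_range_eq_some]
  simp only [decide_eq_true_eq, List.mem_range, Bool.not_eq_true', decide_eq_false_iff_not]
  constructor
  · rintro ⟨⟨h1, h2⟩, h3, h4⟩
    exact ⟨h1, h2, fun k hk hkp h => h4 k hkp ⟨hk, h⟩⟩
  · rintro ⟨h1, h2, h3⟩
    refine ⟨⟨h1, h2⟩, ?_, fun k hk h => h3 k h.1 hk h.2⟩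
    have := (List.getElem?_eq_some_iff.1 h2).1
    omega

theorem getLast_filter_range (P : ℕ → Bool) (N p : ℕ) :
    ((List.range N).filter P).getLast? = some p ↔
      p < N ∧ P p = true ∧ ∀ k, p < k → k < N → P k = false := by
  induction N with
  | zero => simp
  | succ N ih =>
    rw [List.range_succ, List.filter_append]
    by_cases h : P N = true
    · simp only [List.filter_cons, h, if_true, List.filter_nil, List.getLast?_append,
        List.getLast?_singleton, Option.some_or, Option.some.injEq]
      constructor
      · rintro rfl
        exact ⟨by omega, h, fun k h1 h2 => by omega⟩
      · rintro ⟨h1, h2, h3⟩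
        by_contra hne
        have := h3 N (by omega) (by omega)
        simp [h] at this
    · simp only [List.filter_cons, h, List.filter_nil, List.append_nil, if_false,
        Bool.false_eq_true]
      rw [ih]
      constructor
      · rintro ⟨h1, h2, h3⟩
        refine ⟨by omega, h2, fun k hk hkN => ?_⟩
        by_cases hk' : k = N
        · subst hk'; simpa using h
        · exact h3 k hk (by omega)
      · rintro ⟨h1, h2, h3⟩
        have : p ≠ N := by rintro rfl; exact h h2
        exact ⟨by omega, h2, fun k hk hkN => h3 k hk (by omega)⟩

theorem prevOcc_iff (u : List A) (a : A) (q p : ℕ) :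
    prevOcc u a q = some p ↔
      1 ≤ p ∧ p < q ∧ u[p-1]? = some a ∧ ∀ k, p < k → k < q → u[k-1]? ≠ some a := by
  unfold prevOcc
  rw [getLast_filter_range]
  simp only [decide_eq_true_eq, decide_eq_false_iff_not]
  constructor
  · rintro ⟨h0, ⟨h1, h2, h3⟩, h4⟩
    refine ⟨h1, h2, h3, fun k hk hkq h => ?_⟩
    have := (List.getElem?_eq_some_iff.1 h).1
    exact h4 k hk (by omega) ⟨by omega, hkq, h⟩
  · rintro ⟨h1, h2, h3, h4⟩
    have := (List.getElem?_eq_some_iff.1 h3).1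
    exact ⟨by omega, ⟨h1, h2, h3⟩, fun k hk _ h => h4 k hk h.2.1 h.2.2⟩

/-- Inductive version of condensed rankers, with last interval and position. -/
inductive Cd (u : List A) : List (RLetter A) → ℕ → ℕ → ℕ → Prop
  | one (z : RLetter A) (p : ℕ) : stepR u z (startPos u z) = some p →
      Cd u [z] 0 (u.length + 1) p
  | sx (r : List (RLetter A)) (i j q : ℕ) (b : A) (p : ℕ) : Cd u r i j q →
      nextOcc u b q = some p → p < j → Cd u (r ++ [.X b]) q j p
  | sy (r : List (RLetter A)) (i j q : ℕ) (b : A) (p : ℕ) : Cd u r i j q →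
      prevOcc u b q = some p → i < p → Cd u (r ++ [.Y b]) i q p

theorem Cd.ne {u : List A} {r : List (RLetter A)} {i j p : ℕ} (h : Cd u r i j p) : r ≠ [] := by
  cases h <;> simp

theorem Cd.inv_one {u : List A} {z : RLetter A} {i j p : ℕ} (h : Cd u [z] i j p) :
    i = 0 ∧ j = u.length + 1 ∧ stepR u z (startPos u z) = some p := by
  generalize hr : [z] = r at h
  cases h with
  | one z p h => simp_all
  | sx r _ _ _ b _ h => exact absurd h.ne (by cases r <;> simp_all)
  | sy r _ _ _ b _ h => exact absurd h.ne (by cases r <;> simp_all)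

theorem Cd.inv_x {u : List A} {r : List (RLetter A)} {b : A} {i j p : ℕ}
    (h : Cd u (r ++ [.X b]) i j p) (hr : r ≠ []) :
    ∃ i0, Cd u r i0 j i ∧ nextOcc u b i = some p ∧ p < j := by
  generalize hs : r ++ [RLetter.X b] = s at h
  cases h with
  | one z p h => cases r <;> simp_all
  | sx r' i0 _ _ b' _ h h1 h2 =>
    obtain ⟨rfl, h3⟩ := List.append_inj' hs rfl
    obtain rfl : b = b' := by simpa using h3
    exact ⟨i0, h, h1, h2⟩
  | sy r' i0 _ _ b' _ h h1 h2 =>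
    obtain ⟨rfl, h3⟩ := List.append_inj' hs rfl
    simp at h3

theorem Cd.inv_y {u : List A} {r : List (RLetter A)} {b : A} {i j p : ℕ}
    (h : Cd u (r ++ [.Y b]) i j p) (hr : r ≠ []) :
    ∃ j0, Cd u r i j0 j ∧ prevOcc u b j = some p ∧ i < p := by
  generalize hs : r ++ [RLetter.Y b] = s at h
  cases h with
  | one z p h => cases r <;> simp_all
  | sy r' i0 j0 _ b' _ h h1 h2 =>
    obtain ⟨rfl, h3⟩ := List.append_inj' hs rfl
    obtain rfl : b = b' := by simpa using h3
    exact ⟨j0, h, h1, h2⟩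
  | sx r' i0 _ _ b' _ h h1 h2 =>
    obtain ⟨rfl, h3⟩ := List.append_inj' hs rfl
    simp at h3

theorem Cd.unique {u : List A} {r : List (RLetter A)} {i j p i' j' p' : ℕ}
    (h : Cd u r i j p) (h' : Cd u r i' j' p') : i = i' ∧ j = j' ∧ p = p' := by
  induction h generalizing i' j' p' with
  | one z p h =>
    obtain ⟨rfl, rfl, h2⟩ := h'.inv_one
    simp_all
  | sx r i j q b p h h1 h2 ih =>
    obtain ⟨i0, h3, h4, h5⟩ := h'.inv_x h.ne
    obtain ⟨-, rfl, rfl⟩ := ih h3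
    simp_all
  | sy r i j q b p h h1 h2 ih =>
    obtain ⟨i0, h3, h4, h5⟩ := h'.inv_y h.ne
    obtain ⟨rfl, -, rfl⟩ := ih h3
    simp_all

/-- The letter of a ranker letter. -/
def lett : RLetter A → A
  | .X a => a
  | .Y a => a

/-- Relevant end of the interval. -/
def endp : RLetter A → ℕ → ℕ → ℕ
  | .X _, i, _ => i
  | .Y _, _, j => j

theorem stepR_lett {u : List A} {z : RLetter A} {q p : ℕ} (h : stepR u z q = some p) :
    u[p-1]? = some (lett z) ∧ 1 ≤ p ∧ p < u.length + 1 := by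
  cases z with
  | X a =>
    have := (nextOcc_iff _ _ _ _).1 h
    have h2 := (List.getElem?_eq_some_iff.1 this.2.1).1
    exact ⟨this.2.1, by omega, by omega⟩
  | Y a =>
    have := (prevOcc_iff _ _ _ _).1 h
    have h2 := (List.getElem?_eq_some_iff.1 this.2.2.1).1
    exact ⟨this.2.2.1, by omega, by omega⟩

theorem Cd.step {u : List A} {r : List (RLetter A)} {i j p : ℕ}
    (h : Cd u r i j p) : ∃ z, r.getLast? = some z ∧ stepR u z (endp z i j) = some p := by
  cases h with
  | one z p h => exact ⟨z, by simp, by cases z <;> exact h⟩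
  | sx r i0 _ _ b _ h h1 h2 => exact ⟨.X b, by simp, h1⟩
  | sy r i0 _ _ b _ h h1 h2 => exact ⟨.Y b, by simp, h1⟩

theorem Cd.bd {u : List A} {r : List (RLetter A)} {i j p : ℕ}
    (h : Cd u r i j p) : i < p ∧ p < j := by
  cases h with
  | one z p h => exact ⟨(stepR_lett h).2.1, (stepR_lett h).2.2⟩
  | sx r i0 _ _ b _ h h1 h2 => exact ⟨((nextOcc_iff _ _ _ _).1 h1).1, h2⟩
  | sy r i0 _ _ b _ h h1 h2 => exact ⟨h2, ((prevOcc_iff _ _ _ _).1 h1).2.1⟩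

theorem evalFrom_snoc (u : List A) (r : List (RLetter A)) (z : RLetter A) (q : ℕ) :
    evalFrom u (r ++ [z]) q = (evalFrom u r q).bind (stepR u z) := by
  induction r generalizing q with
  | nil => simp [evalFrom]
  | cons y r ih =>
    simp only [List.cons_append, evalFrom, Option.bind_assoc]
    congr 1
    funext x
    exact ih x

theorem evalR_snoc (u : List A) (r : List (RLetter A)) (z : RLetter A) (hr : r ≠ []) :
    evalR u (r ++ [z]) = (evalR u r).bind (stepR u z) := by
  cases r with
  | nil => exact absurd rfl hr
  | cons y r => exact evalFrom_snoc u (y :: r) z _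

theorem evalR_one (u : List A) (z : RLetter A) :
    evalR u [z] = stepR u z (startPos u z) := by
  simp [evalR, evalFrom]
  
theorem Cd.eval {u : List A} {r : List (RLetter A)} {i j p : ℕ}
    (h : Cd u r i j p) : evalR u r = some p := by
  induction h with
  | one z p h => rw [evalR_one, h]
  | sx r i0 _ _ b _ h h1 h2 ih => rw [evalR_snoc _ _ _ h.ne, ih]; exact h1
  | sy r i0 _ _ b _ h h1 h2 ih => rw [evalR_snoc _ _ _ h.ne, ih]; exact h1

/-- Update rule of the interval chain. -/
def Rule (u : List A) (y z : RLetter A) (i j i' j' : ℕ) : Prop :=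
  (match z with
    | .X _ => stepR u y (endp y i j) = some i' ∧ j' = j
    | .Y _ => i' = i ∧ stepR u y (endp y i j) = some j') ∧
  i ≤ i' ∧ j' ≤ j ∧ (i < i' ∨ j' < j)

/-- Interval chain. -/
def Chn (u : List A) (r : List (RLetter A)) (i j : ℕ → ℕ) : Prop :=
  i 0 = 0 ∧ j 0 = u.length + 1 ∧
  ∀ l y z, r[l]? = some y → r[l+1]? = some z → Rule u y z (i l) (j l) (i (l+1)) (j (l+1))

theorem condensed_iff_chn (u : List A) (r : List (RLetter A)) :
    Condensed u r ↔ ∃ p i j, evalR u r = some p ∧ Chn u r i j ∧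
      i (r.length - 1) < p ∧ p < j (r.length - 1) := by
  constructor
  · rintro ⟨p, i, j, h0, h1, h2, hxx, hyy, hxy, hyx, hs, h3, h4⟩
    refine ⟨p, i, j, h0, ⟨h1, h2, fun l y z hy hz => ?_⟩, h3, h4⟩
    have hl := (List.getElem?_eq_some_iff.1 hz).1
    refine ⟨?_, hs (l+1) (by omega) hl⟩
    cases y <;> cases z
    · exact hxx (l+1) _ _ (by omega) hy hz
    · exact hxy (l+1) _ _ (by omega) hy hz
    · exact hyx (l+1) _ _ (by omega) hy hz
    · exact hyy (l+1) _ _ (by omega) hy hz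
  · rintro ⟨p, i, j, h0, ⟨h1, h2, h⟩, h3, h4⟩
    refine ⟨p, i, j, h0, h1, h2, ?_, ?_, ?_, ?_, ?_, h3, h4⟩
    · intro l a b hl hy hz
      obtain ⟨l, rfl⟩ : ∃ k, l = k + 1 := ⟨l - 1, by omega⟩
      exact (h l _ _ hy hz).1
    · intro l a b hl hy hz
      obtain ⟨l, rfl⟩ : ∃ k, l = k + 1 := ⟨l - 1, by omega⟩
      exact (h l _ _ hy hz).1
    · intro l a b hl hy hz
      obtain ⟨l, rfl⟩ : ∃ k, l = k + 1 := ⟨l - 1, by omega⟩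
      exact (h l _ _ hy hz).1
    · intro l a b hl hy hz
      obtain ⟨l, rfl⟩ : ∃ k, l = k + 1 := ⟨l - 1, by omega⟩
      exact (h l _ _ hy hz).1
    · intro l hl hlr
      obtain ⟨l, rfl⟩ : ∃ k, l = k + 1 := ⟨l - 1, by omega⟩
      exact (h l _ _ (List.getElem?_eq_getElem (by omega)) (List.getElem?_eq_getElem hlr)).2

theorem Chn.init {u : List A} {r : List (RLetter A)} {z : RLetter A} {i j : ℕ → ℕ}
    (h : Chn u (r ++ [z]) i j) : Chn u r i j := by
  refine ⟨h.1, h.2.1, fun l y z' hy hz => h.2.2 l y z' ?_ ?_⟩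
  · rw [List.getElem?_append_left (List.getElem?_eq_some_iff.1 hy).1]; exact hy
  · rw [List.getElem?_append_left (List.getElem?_eq_some_iff.1 hz).1]; exact hz

theorem Chn.last {u : List A} {r : List (RLetter A)} {y z : RLetter A} {i j : ℕ → ℕ}
    (h : Chn u (r ++ [z]) i j) (hy : r.getLast? = some y) :
    Rule u y z (i (r.length - 1)) (j (r.length - 1)) (i r.length) (j r.length) := by
  have hr : 0 < r.length := by cases r <;> simp_all
  have := h.2.2 (r.length - 1) y z
    (by rw [List.getElem?_append_left (by omega), ← List.getLast?_eq_getElem?]; exact hy)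
    (by rw [Nat.sub_add_cancel hr]; simp)
  rwa [Nat.sub_add_cancel hr] at this

theorem Chn.step {u : List A} {r : List (RLetter A)} {i j : ℕ → ℕ}
    (h : Chn u r i j) {p : ℕ} (hp : evalR u r = some p) :
    ∃ z, r.getLast? = some z ∧
      stepR u z (endp z (i (r.length - 1)) (j (r.length - 1))) = some p := by
  induction r using List.reverseRecOn generalizing p with
  | nil => simp [evalR] at hp
  | append_singleton r z ih =>
    refine ⟨z, by simp, ?_⟩
    simp only [List.length_append, List.length_singleton, Nat.add_sub_cancel]
    by_cases hr : r = []
    · subst hr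
      simp only [List.nil_append, evalR_one] at hp
      simp only [List.length_nil, h.1, h.2.1]
      cases z <;> exact hp
    · rw [evalR_snoc _ _ _ hr] at hp
      obtain ⟨q, hq, hqp⟩ := Option.bind_eq_some_iff.1 hp
      obtain ⟨y, hy, hyq⟩ := ih h.init hq
      have hR := (h.last hy).1
      cases z with
      | X b =>
        have := hyq.symm.trans hR.1
        simp only [Option.some.injEq] at this
        simpa [endp, ← this] using hqp
      | Y b =>
        have := hyq.symm.trans hR.2
        simp only [Option.some.injEq] at this
        simpa [endp, ← this] using hqp

theorem Chn.cd {u : List A} {r : List (RLetter A)} {i j : ℕ → ℕ}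
    (h : Chn u r i j) {p : ℕ} (hp : evalR u r = some p)
    (h1 : i (r.length - 1) < p) (h2 : p < j (r.length - 1)) :
    Cd u r (i (r.length - 1)) (j (r.length - 1)) p := by
  induction r using List.reverseRecOn generalizing p with
  | nil => simp [evalR] at hp
  | append_singleton r z ih =>
    simp only [List.length_append, List.length_singleton, Nat.add_sub_cancel] at h1 h2 ⊢
    by_cases hr : r = []
    · subst hr
      simp only [List.nil_append, evalR_one] at hp ⊢
      simp only [List.length_nil, h.1, h.2.1]
      exact Cd.one z p hp
    · rw [evalR_snoc _ _ _ hr] at hp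
      obtain ⟨q, hq, hqp⟩ := Option.bind_eq_some_iff.1 hp
      obtain ⟨y, hy, hyq⟩ := h.init.step hq
      have hR := h.last hy
      have ih' := ih h.init hq
      have hyq2 := hyq
      have hb : endp y (i (r.length - 1)) (j (r.length - 1)) = i (r.length - 1) ∧
          i (r.length - 1) < q ∨
          endp y (i (r.length - 1)) (j (r.length - 1)) = j (r.length - 1) ∧
          q < j (r.length - 1) := by
        cases y with
        | X a => exact Or.inl ⟨rfl, ((nextOcc_iff _ _ _ _).1 hyq).1⟩
        | Y a => exact Or.inr ⟨rfl, ((prevOcc_iff _ _ _ _).1 hyq).2.1⟩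
      obtain ⟨hR1, hR2, hR3, hR4⟩ := hR
      cases z with
      | X b =>
        have hx := hyq.symm.trans hR1.1
        simp only [Option.some.injEq] at hx
        have hj := hR1.2
        have hc := ih' (by omega) (by omega)
        rw [hj, ← hx]
        exact Cd.sx _ _ _ _ b p hc hqp (by omega)
      | Y b =>
        have hx := hyq.symm.trans hR1.2
        simp only [Option.some.injEq] at hx
        have hj := hR1.1
        have hc := ih' (by omega) (by omega)
        rw [hj, ← hx]
        exact Cd.sy _ _ _ _ b p hc hqp (by omega)

theorem Chn.ext {u : List A} {r : List (RLetter A)} {y z : RLetter A} {i j : ℕ → ℕ} {i' j' : ℕ}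
    (h : Chn u r i j) (hy : r.getLast? = some y)
    (hR : Rule u y z (i (r.length - 1)) (j (r.length - 1)) i' j') :
    Chn u (r ++ [z]) (Function.update i r.length i') (Function.update j r.length j') := by
  have hr : 0 < r.length := by cases r <;> simp_all
  refine ⟨?_, ?_, fun l y' z' hy' hz' => ?_⟩
  · rw [Function.update_of_ne (by omega)]; exact h.1
  · rw [Function.update_of_ne (by omega)]; exact h.2.1
  · have hl := (List.getElem?_eq_some_iff.1 hz').1
    simp only [List.length_append, List.length_singleton] at hl
    rw [Function.update_of_ne (by omega), Function.update_of_ne (by omega)]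
    rw [List.getElem?_append_left (by omega)] at hy'
    by_cases hlr : l + 1 = r.length
    · rw [hlr, Function.update_self, Function.update_self]
      have : l = r.length - 1 := by omega
      subst this
      rw [← List.getLast?_eq_getElem?, hy] at hy'
      rw [hlr] at hz'
      simp at hz' hy'
      subst hz' hy'
      exact hR
    · rw [Function.update_of_ne hlr, Function.update_of_ne hlr]
      rw [List.getElem?_append_left (by omega)] at hz'
      exact h.2.2 l y' z' hy' hz'

theorem Cd.chn {u : List A} {r : List (RLetter A)} {i j p : ℕ} (h : Cd u r i j p) :
    ∃ I J, Chn u r I J ∧ I (r.length - 1) = i ∧ J (r.length - 1) = j := by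
  induction h with
  | one z p h =>
    refine ⟨fun _ => 0, fun _ => u.length + 1, ⟨rfl, rfl, fun l y z h1 h2 => ?_⟩, rfl, rfl⟩
    simp at h2
  | sx r i j q b p h h1 h2 ih =>
    obtain ⟨I, J, hc, rfl, rfl⟩ := ih
    obtain ⟨y, hy, hs⟩ := h.step
    have hb := h.bd
    refine ⟨_, _, hc.ext (z := .X b) (i' := q) (j' := J (r.length - 1)) hy
      ⟨⟨hs, rfl⟩, by omega, by omega, by omega⟩, by simp, by simp⟩
  | sy r i j q b p h h1 h2 ih =>
    obtain ⟨I, J, hc, rfl, rfl⟩ := ih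
    obtain ⟨y, hy, hs⟩ := h.step
    have hb := h.bd
    refine ⟨_, _, hc.ext (z := .Y b) (i' := I (r.length - 1)) (j' := q) hy
      ⟨⟨rfl, hs⟩, by omega, by omega, by omega⟩, by simp, by simp⟩

theorem condensed_iff (u : List A) (r : List (RLetter A)) :
    Condensed u r ↔ ∃ i j p, Cd u r i j p := by
  rw [condensed_iff_chn]
  constructor
  · rintro ⟨p, i, j, h0, h1, h2, h3⟩
    exact ⟨_, _, _, h1.cd h0 h2 h3⟩
  · rintro ⟨i, j, p, h⟩
    obtain ⟨I, J, hc, rfl, rfl⟩ := h.chn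
    exact ⟨p, I, J, h.eval, hc, h.bd⟩

/-- Sublist with the same first letter. -/
def Le (r' r : List (RLetter A)) : Prop := r'.Sublist r ∧ r'.head? = r.head?

theorem Le.trans {r s t : List (RLetter A)} (h : Le r s) (h' : Le s t) : Le r t :=
  ⟨h.1.trans h'.1, h.2.trans h'.2⟩

theorem Le.snoc {r s : List (RLetter A)} (h : Le r s) (z : RLetter A) :
    Le (r ++ [z]) (s ++ [z]) :=
  ⟨h.1.append_right _, by simp [List.head?_append, h.2]⟩

theorem le_snoc (r : List (RLetter A)) (z : RLetter A) (hr : r ≠ []) : Le r (r ++ [z]) :=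
  ⟨List.sublist_append_left _ _, by cases r <;> simp_all⟩

theorem numBlocks_mono {l' l : List (RLetter A)} (h : l'.Sublist l) (z : RLetter A) :
    numBlocks (z :: l') ≤ numBlocks (z :: l) := by
  induction h generalizing z with
  | slnil => exact le_rfl
  | @cons l1 l2 a h ih =>
    refine (ih z).trans ?_
    cases l2 with
    | nil => simp [numBlocks]
    | cons c t =>
      simp only [numBlocks]
      cases z <;> cases a <;> cases c <;> simp [sameDir] <;> omega
  | cons_cons a h ih =>
    simp only [numBlocks]
    have := ih a
    omega

theorem Le.num {r' r : List (RLetter A)} (h : Le r' r) : numBlocks r' ≤ numBlocks r := by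
  cases r' with
  | nil => simp [numBlocks]
  | cons z t =>
    cases r with
    | nil => simp [Le] at h
    | cons y s =>
      obtain ⟨h1, h2⟩ := h
      obtain rfl : z = y := by simpa using h2
      exact numBlocks_mono (List.cons_sublist_cons.1 h1) z

theorem Le.startsX {r' r : List (RLetter A)} (h : Le r' r) (hs : startsX r) : startsX r' := by
  obtain ⟨a, t, rfl⟩ := hs
  cases r' with
  | nil => simp [Le] at h
  | cons z s => exact ⟨a, s, by have := h.2; simp at this; rw [this]⟩

theorem Le.startsY {r' r : List (RLetter A)} (h : Le r' r) (hs : startsY r) : startsY r' := by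
  obtain ⟨a, t, rfl⟩ := hs
  cases r' with
  | nil => simp [Le] at h
  | cons z s => exact ⟨a, s, by have := h.2; simp at this; rw [this]⟩

theorem Le.uRX {m n : ℕ} {r' r : List (RLetter A)} (h : Le r' r) (hs : uRX m n r) :
    uRX m n r' := by
  have h1 := h.num
  have h2 := h.1.length_le
  rcases hs with ⟨m', n', hm, hn, rfl, rfl, h3⟩ | ⟨m', n', hm, hn, rfl, rfl, h3⟩
  · exact Or.inl ⟨_, _, h1.trans hm, h2.trans hn, rfl, rfl, h.startsX h3⟩
  · exact Or.inr ⟨_, _, h1.trans_lt hm, h2.trans_lt hn, rfl, rfl, h.startsY h3⟩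

theorem Le.uRY {m n : ℕ} {r' r : List (RLetter A)} (h : Le r' r) (hs : uRY m n r) :
    uRY m n r' := by
  have h1 := h.num
  have h2 := h.1.length_le
  rcases hs with ⟨m', n', hm, hn, rfl, rfl, h3⟩ | ⟨m', n', hm, hn, rfl, rfl, h3⟩
  · exact Or.inl ⟨_, _, h1.trans hm, h2.trans hn, rfl, rfl, h.startsY h3⟩
  · exact Or.inr ⟨_, _, h1.trans_lt hm, h2.trans_lt hn, rfl, rfl, h.startsX h3⟩

/-- Agreement on condensed rankers for a snoc with a Y-letter. -/
theorem agree_y {u v : List A} {t : List (RLetter A)} {i j q i' j' q' p p' : ℕ} {b : A}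
    (hag : (∃ i j p, Cd u (t ++ [.Y b]) i j p) ↔ ∃ i j p, Cd v (t ++ [.Y b]) i j p)
    (hu : Cd u t i j q) (hv : Cd v t i' j' q')
    (hp : prevOcc u b q = some p) (hp' : prevOcc v b q' = some p') : i < p ↔ i' < p' := by
  constructor
  · intro h
    obtain ⟨i1, j1, p1, h1⟩ := hag.1 ⟨_, _, _, Cd.sy _ _ _ _ b _ hu hp h⟩
    obtain ⟨j0, h2, h3, h4⟩ := h1.inv_y hu.ne
    obtain ⟨rfl, rfl, rfl⟩ := h2.unique hv
    simp_all
  · intro h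
    obtain ⟨i1, j1, p1, h1⟩ := hag.2 ⟨_, _, _, Cd.sy _ _ _ _ b _ hv hp' h⟩
    obtain ⟨j0, h2, h3, h4⟩ := h1.inv_y hu.ne
    obtain ⟨rfl, rfl, rfl⟩ := h2.unique hu
    simp_all

/-- Agreement on condensed rankers for a snoc with an X-letter. -/
theorem agree_x {u v : List A} {t : List (RLetter A)} {i j q i' j' q' p p' : ℕ} {b : A}
    (hag : (∃ i j p, Cd u (t ++ [.X b]) i j p) ↔ ∃ i j p, Cd v (t ++ [.X b]) i j p)
    (hu : Cd u t i j q) (hv : Cd v t i' j' q')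
    (hp : nextOcc u b q = some p) (hp' : nextOcc v b q' = some p') : p < j ↔ p' < j' := by
  constructor
  · intro h
    obtain ⟨i1, j1, p1, h1⟩ := hag.1 ⟨_, _, _, Cd.sx _ _ _ _ b _ hu hp h⟩
    obtain ⟨j0, h2, h3, h4⟩ := h1.inv_x hu.ne
    obtain ⟨rfl, rfl, rfl⟩ := h2.unique hv
    simp_all
  · intro h
    obtain ⟨i1, j1, p1, h1⟩ := hag.2 ⟨_, _, _, Cd.sx _ _ _ _ b _ hv hp' h⟩
    obtain ⟨j0, h2, h3, h4⟩ := h1.inv_x hu.ne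
    obtain ⟨rfl, rfl, rfl⟩ := h2.unique hu
    simp_all

/-- Both words see the same letter at the position reached by `t`. -/
theorem same_letter {u v : List A} {t : List (RLetter A)} {i j q i' j' q' : ℕ}
    (hu : Cd u t i j q) (hv : Cd v t i' j' q') :
    1 ≤ q ∧ 1 ≤ q' ∧ ∀ b, u[q-1]? = some b ↔ v[q'-1]? = some b := by
  obtain ⟨z, hz, h1⟩ := hu.step
  obtain ⟨z', hz', h2⟩ := hv.step
  obtain rfl : z = z' := by simpa [hz] using hz'
  have h3 := stepR_lett h1
  have h4 := stepR_lett h2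
  exact ⟨h3.2.1, h4.2.1, fun b => by rw [h3.1, h4.1]⟩

theorem key_y {u v : List A} {b : A} {s : List (RLetter A)} {i j q i' j' q' p p' : ℕ}
    (hu : Cd u s i j q) (hv : Cd v s i' j' q')
    (hag : ∀ r, Le r (s ++ [.Y b]) → ((∃ i j p, Cd u r i j p) ↔ ∃ i j p, Cd v r i j p))
    (h1 : 1 ≤ p) (hpi : p ≤ i) (hb : u[p-1]? = some b)
    (hn : ∀ k, p < k → k ≤ i → u[k-1]? ≠ some b)
    (h1' : 1 ≤ p') (hpi' : p' ≤ i') (hb' : v[p'-1]? = some b)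
    (hn' : ∀ k, p' < k → k ≤ i' → v[k-1]? ≠ some b) :
    ∃ r, Le r (s ++ [.Y b]) ∧ (∃ i j, Cd u r i j p) ∧ ∃ i j, Cd v r i j p' := by
  induction hu generalizing i' j' q' with
  | one z p h => omega
  | sy t i j q c _ h h2 h3 ih =>
    obtain ⟨j0, hv0, -, -⟩ := hv.inv_y h.ne
    have hle : Le (t ++ [.Y b]) ((t ++ [.Y c]) ++ [.Y b]) := (le_snoc t _ h.ne).snoc _
    obtain ⟨r, hr, hh⟩ := ih hv0 (fun r hr => hag r (hr.trans hle)) hpi hn hpi' hn'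
    exact ⟨r, hr.trans hle, hh⟩
  | sx t i j q c _ h h2 h3 ih =>
    obtain ⟨j0, hv0, -, -⟩ := hv.inv_x h.ne
    have hle : Le (t ++ [.Y b]) ((t ++ [.X c]) ++ [.Y b]) := (le_snoc t _ h.ne).snoc _
    obtain ⟨hq1, hq1', hsl⟩ := same_letter h hv0
    by_cases hpq : u[q-1]? = some b
    · have e1 : p = q := by
        by_contra hne
        exact hn q (by omega) le_rfl hpq
      have e2 : p' = i' := by
        by_contra hne
        exact hn' i' (by omega) le_rfl ((hsl b).1 hpq)
      subst e1 e2
      exact ⟨t, (le_snoc t _ h.ne).trans hle, ⟨_, _, h⟩, ⟨_, _, hv0⟩⟩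
    · have hpq' : ¬ v[i'-1]? = some b := fun hh => hpq ((hsl b).2 hh)
      have l1 : p < q := by
        rcases Nat.lt_or_ge p q with h | h
        · exact h
        · exact absurd (by rw [show q = p by omega]; exact hb) hpq
      have l2 : p' < i' := by
        rcases Nat.lt_or_ge p' i' with h | h
        · exact h
        · exact absurd (by rw [show i' = p' by omega]; exact hb') hpq'
      have o1 : prevOcc u b q = some p :=
        (prevOcc_iff _ _ _ _).2 ⟨h1, l1, hb, fun k hk hkq => hn k hk hkq.le⟩
      have o2 : prevOcc v b i' = some p' :=
        (prevOcc_iff _ _ _ _).2 ⟨h1', l2, hb', fun k hk hkq => hn' k hk hkq.le⟩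
      have hA := agree_y (hag _ hle) h hv0 o1 o2
      by_cases hi : i < p
      · exact ⟨_, hle, ⟨_, _, Cd.sy _ _ _ _ b _ h o1 hi⟩,
          ⟨_, _, Cd.sy _ _ _ _ b _ hv0 o2 (hA.1 hi)⟩⟩
      · have hi' : ¬ j0 < p' := fun hh => hi (hA.2 hh)
        have hbd := h.bd
        have hbd' := hv0.bd
        obtain ⟨r, hr, hh⟩ := ih hv0 (fun r hr => hag r (hr.trans hle)) (by omega)
          (fun k hk hki => hn k hk (by omega)) (by omega) (fun k hk hki => hn' k hk (by omega))
        exact ⟨r, hr.trans hle, hh⟩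

theorem key_x {u v : List A} {b : A} {s : List (RLetter A)} {i j q i' j' q' p p' : ℕ}
    (hu : Cd u s i j q) (hv : Cd v s i' j' q')
    (hag : ∀ r, Le r (s ++ [.X b]) → ((∃ i j p, Cd u r i j p) ↔ ∃ i j p, Cd v r i j p))
    (hpi : j ≤ p) (hb : u[p-1]? = some b)
    (hn : ∀ k, k < p → j ≤ k → u[k-1]? ≠ some b)
    (hpi' : j' ≤ p') (hb' : v[p'-1]? = some b)
    (hn' : ∀ k, k < p' → j' ≤ k → v[k-1]? ≠ some b) :
    ∃ r, Le r (s ++ [.X b]) ∧ (∃ i j, Cd u r i j p) ∧ ∃ i j, Cd v r i j p' := by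
  induction hu generalizing i' j' q' with
  | one z p h =>
    have := (List.getElem?_eq_some_iff.1 hb).1
    omega
  | sx t i j q c _ h h2 h3 ih =>
    obtain ⟨j0, hv0, -, -⟩ := hv.inv_x h.ne
    have hle : Le (t ++ [.X b]) ((t ++ [.X c]) ++ [.X b]) := (le_snoc t _ h.ne).snoc _
    obtain ⟨r, hr, hh⟩ := ih hv0 (fun r hr => hag r (hr.trans hle)) hpi hn hpi' hn'
    exact ⟨r, hr.trans hle, hh⟩
  | sy t i j q c _ h h2 h3 ih =>
    obtain ⟨j0, hv0, -, -⟩ := hv.inv_y h.ne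
    have hle : Le (t ++ [.X b]) ((t ++ [.Y c]) ++ [.X b]) := (le_snoc t _ h.ne).snoc _
    obtain ⟨hq1, hq1', hsl⟩ := same_letter h hv0
    by_cases hpq : u[q-1]? = some b
    · have e1 : p = q := by
        by_contra hne
        exact hn q (by omega) le_rfl hpq
      have e2 : p' = j' := by
        by_contra hne
        exact hn' j' (by omega) le_rfl ((hsl b).1 hpq)
      subst e1 e2
      exact ⟨t, (le_snoc t _ h.ne).trans hle, ⟨_, _, h⟩, ⟨_, _, hv0⟩⟩
    · have hpq' : ¬ v[j'-1]? = some b := fun hh => hpq ((hsl b).2 hh)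
      have l1 : q < p := by
        rcases Nat.lt_or_ge q p with h | h
        · exact h
        · exact absurd (by rw [show q = p by omega]; exact hb) hpq
      have l2 : j' < p' := by
        rcases Nat.lt_or_ge j' p' with h | h
        · exact h
        · exact absurd (by rw [show j' = p' by omega]; exact hb') hpq'
      have o1 : nextOcc u b q = some p :=
        (nextOcc_iff _ _ _ _).2 ⟨l1, hb, fun k hk hkq => hn k hkq hk.le⟩
      have o2 : nextOcc v b j' = some p' :=
        (nextOcc_iff _ _ _ _).2 ⟨l2, hb', fun k hk hkq => hn' k hkq hk.le⟩
      have hA := agree_x (hag _ hle) h hv0 o1 o2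
      by_cases hi : p < j
      · exact ⟨_, hle, ⟨_, _, Cd.sx _ _ _ _ b _ h o1 hi⟩,
          ⟨_, _, Cd.sx _ _ _ _ b _ hv0 o2 (hA.1 hi)⟩⟩
      · have hi' : ¬ p' < j0 := fun hh => hi (hA.2 hh)
        have hbd := h.bd
        have hbd' := hv0.bd
        obtain ⟨r, hr, hh⟩ := ih hv0 (fun r hr => hag r (hr.trans hle)) (by omega)
          (fun k hk hki => hn k hk (by omega)) (by omega) (fun k hk hki => hn' k hk (by omega))
        exact ⟨r, hr.trans hle, hh⟩

theorem main_aux {u v : List A} (r : List (RLetter A)) (p p' : ℕ)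
    (hag : ∀ s, Le s r → ((∃ i j p, Cd u s i j p) ↔ ∃ i j p, Cd v s i j p))
    (hp : evalR u r = some p) (hp' : evalR v r = some p') :
    ∃ s, Le s r ∧ (∃ i j, Cd u s i j p) ∧ ∃ i j, Cd v s i j p' := by
  induction r using List.reverseRecOn generalizing p p' with
  | nil => simp [evalR] at hp
  | append_singleton r z ih =>
    by_cases hr : r = []
    · subst hr
      simp only [List.nil_append, evalR_one] at hp hp' ⊢
      exact ⟨[z], ⟨List.Sublist.refl _, rfl⟩, ⟨_, _, Cd.one z p hp⟩, ⟨_, _, Cd.one z p' hp'⟩⟩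
    · rw [evalR_snoc _ _ _ hr] at hp hp'
      obtain ⟨q, hq, hqp⟩ := Option.bind_eq_some_iff.1 hp
      obtain ⟨q', hq', hqp'⟩ := Option.bind_eq_some_iff.1 hp'
      obtain ⟨t, ht, ⟨i, j, hu⟩, i', j', hv⟩ := ih q q'
        (fun s hs => hag s (hs.trans (le_snoc r z hr))) hq hq'
      have hle := ht.snoc z
      have hbd := hu.bd
      have hbd' := hv.bd
      cases z with
      | X b =>
        change nextOcc u b q = some p at hqp
        change nextOcc v b q' = some p' at hqp'
        have hA := agree_x (hag _ hle) hu hv hqp hqp'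
        by_cases hi : p < j
        · exact ⟨_, hle, ⟨_, _, Cd.sx _ _ _ _ b _ hu hqp hi⟩,
            ⟨_, _, Cd.sx _ _ _ _ b _ hv hqp' (hA.1 hi)⟩⟩
        · have hi' : ¬ p' < j' := fun hh => hi (hA.2 hh)
          have a1 := (nextOcc_iff _ _ _ _).1 hqp
          have a2 := (nextOcc_iff _ _ _ _).1 hqp'
          obtain ⟨s, hs, hh⟩ := key_x hu hv (fun s hs => hag s (hs.trans hle)) (by omega)
            a1.2.1 (fun k h1 h2 => a1.2.2 k (by omega) h1) (by omega)
            a2.2.1 (fun k h1 h2 => a2.2.2 k (by omega) h1)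
          exact ⟨s, hs.trans hle, hh⟩
      | Y b =>
        change prevOcc u b q = some p at hqp
        change prevOcc v b q' = some p' at hqp'
        have hA := agree_y (hag _ hle) hu hv hqp hqp'
        by_cases hi : i < p
        · exact ⟨_, hle, ⟨_, _, Cd.sy _ _ _ _ b _ hu hqp hi⟩,
            ⟨_, _, Cd.sy _ _ _ _ b _ hv hqp' (hA.1 hi)⟩⟩
        · have hi' : ¬ i' < p' := fun hh => hi (hA.2 hh)
          have a1 := (prevOcc_iff _ _ _ _).1 hqp
          have a2 := (prevOcc_iff _ _ _ _).1 hqp'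
          obtain ⟨s, hs, hh⟩ := key_y hu hv (fun s hs => hag s (hs.trans hle)) a1.1 (by omega)
            a1.2.2.1 (fun k h1 h2 => a1.2.2.2 k h1 (by omega)) a2.1 (by omega)
            a2.2.2.1 (fun k h1 h2 => a2.2.2.2 k h1 (by omega))
          exact ⟨s, hs.trans hle, hh⟩

/-- If `u, v` agree on condensed rankers from `uR^Z_{m,n}` and
`r ∈ uR^Z_{m,n}` is defined on both, then some `r' ∈ uR^Z_{m,n}` is condensed on both
and coincides with `r` on both words. -/
theorem statement6 (m n : ℕ) (hm : 1 ≤ m) (hmn : m ≤ n)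
    (ZR : ℕ → ℕ → List (RLetter A) → Prop) (hZR : ZR = uRX ∨ ZR = uRY)
    (u v : List A) (hu : u ≠ []) (hv : v ≠ [])
    (hagree : ∀ r, ZR m n r → (Condensed u r ↔ Condensed v r))
    (r : List (RLetter A)) (hr : ZR m n r)
    (hdu : Defined u r) (hdv : Defined v r) :
    ∃ r', ZR m n r' ∧ Condensed u r' ∧ Condensed v r' ∧
      evalR u r' = evalR u r ∧ evalR v r' = evalR v r := by
  have hmono : ∀ s t, Le s t → ZR m n t → ZR m n s := by
    rcases hZR with rfl | rfl
    · exact fun s t h h' => h.uRX h'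
    · exact fun s t h h' => h.uRY h'
  obtain ⟨p, hp⟩ := Option.isSome_iff_exists.1 hdu
  obtain ⟨p', hp'⟩ := Option.isSome_iff_exists.1 hdv
  obtain ⟨s, hs, ⟨i, j, h1⟩, i', j', h2⟩ := main_aux (u := u) (v := v) r p p'
    (fun s hs => by
      rw [← condensed_iff, ← condensed_iff]
      exact hagree s (hmono s r hs hr)) hp hp'
  exact ⟨s, hmono s r hs hr, (condensed_iff _ _).2 ⟨_, _, _, h1⟩,
    (condensed_iff _ _).2 ⟨_, _, _, h2⟩, h1.eval.trans hp.symm, h2.eval.trans hp'.symm⟩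

end RankerPaper
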